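/- Let Γ be a finite extensive-form game with perfect recall and suppose (β*, β̃*, μ*) satisfies the Nash characterization. Then for every i ∈ N and j ∈ M_i, u^i(β* ∧ I_i^j) = u^i(ϱ^i_{I_i^j}(β*, β̃*) ∧ I_i^j). -/

import Mathlib

open scoped Classical

noncomputable section

/-- A finite extensive-form game.  Actions are labelled by natural numbers drawn from the
finite pool `actFinset`; a history is the list of actions taken so far; players are `Fin n`
and `P h = none` means that the chance player moves after `h`.  The information sets of
player `i` are `Info i j` for `j < m i`, and `infoIdx h` is the index of the information
set containing a nonterminal history `h` at which some player moves.  Payoffs `u i h` are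
relevant on terminal histories. -/
structure EFG where
  n : ℕ
  actFinset : Finset ℕ
  H : Finset (List ℕ)
  P : List ℕ → Option (Fin n)
  fc : List ℕ → ℕ → ℝ
  m : Fin n → ℕ
  Info : Fin n → ℕ → Finset (List ℕ)
  infoIdx : List ℕ → ℕ
  u : Fin n → List ℕ → ℝ
  empty_mem : ([] : List ℕ) ∈ H
  prefixClosed : ∀ h ∈ H, ∀ h' : List ℕ, h' <+: h → h' ∈ H
  act_mem : ∀ (h : List ℕ) (a : ℕ), h ++ [a] ∈ H → a ∈ actFinset
  fc_nonneg : ∀ h a, 0 ≤ fc h a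
  fc_sum : ∀ h ∈ H, P h = none → (∃ a, h ++ [a] ∈ H) →
    ∑ a ∈ actFinset.filter (fun a => h ++ [a] ∈ H), fc h a = 1
  info_spec : ∀ (i : Fin n) (j : ℕ) (h : List ℕ), j < m i →
    (h ∈ Info i j ↔ h ∈ H ∧ P h = some i ∧ (∃ a, h ++ [a] ∈ H) ∧ infoIdx h = j)
  infoIdx_lt : ∀ (i : Fin n), ∀ h ∈ H, P h = some i → (∃ a, h ++ [a] ∈ H) → infoIdx h < m i
  info_nonempty : ∀ (i : Fin n) (j : ℕ), j < m i → (Info i j).Nonempty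
  info_actions : ∀ (i : Fin n) (j : ℕ), j < m i → ∀ h ∈ Info i j, ∀ h' ∈ Info i j,
    ∀ a : ℕ, (h ++ [a] ∈ H ↔ h' ++ [a] ∈ H)
  act_unique : ∀ (h h' : List ℕ) (a : ℕ), h ∈ H → h' ∈ H → h ++ [a] ∈ H → h' ++ [a] ∈ H →
    P h = P h' ∧ infoIdx h = infoIdx h'

namespace EFG

/-- Behavioral strategy profiles (player, information-set index, action ↦ probability). -/
abbrev Profile (G : EFG) : Type := Fin G.n → ℕ → ℕ → ℝ

/-- Belief systems (player, information-set index, history ↦ probability). -/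
abbrev Belief (G : EFG) : Type := Fin G.n → ℕ → List ℕ → ℝ

variable (G : EFG)

/-- The set `Z` of terminal histories. -/
def Zset : Finset (List ℕ) := G.H.filter fun h => ∀ a : ℕ, h ++ [a] ∉ G.H

/-- The set `A(h)` of actions available after a history. -/
def A (h : List ℕ) : Finset ℕ := G.actFinset.filter fun a => h ++ [a] ∈ G.H

/-- The common action set `A(I_i^j)` of an information set. -/
def infoA (i : Fin G.n) (j : ℕ) : Finset ℕ := (G.Info i j).sup fun h => G.A h

/-- A behavioral strategy of player `i`: a probability distribution on `A(I_i^j)` for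
each information set `I_i^j`. -/
def IsBehStrategy (i : Fin G.n) (b : ℕ → ℕ → ℝ) : Prop :=
  ∀ j < G.m i, (∀ a ∈ G.infoA i j, 0 ≤ b j a) ∧ ∑ a ∈ G.infoA i j, b j a = 1

/-- A behavioral strategy profile. -/
def IsBehProfile (β : G.Profile) : Prop := ∀ i : Fin G.n, G.IsBehStrategy i (β i)

/-- The probability of action `a` at history `h`: the chance distribution if the chance
player moves, and the mover's behavioral strategy otherwise. -/
def moveProb (β : G.Profile) (h : List ℕ) (a : ℕ) : ℝ :=
  (G.P h).elim (G.fc h a) fun i => β i (G.infoIdx h) a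

/-- Player `i`'s record `X_i` of the information sets he encounters along a history and the
actions he takes at them, accumulated starting from the prefix `pre`. -/
def recordFrom (i : Fin G.n) : List ℕ → List ℕ → List (ℕ × ℕ)
  | _, [] => []
  | pre, b :: rest =>
    (if G.P pre = some i then [(G.infoIdx pre, b)] else []) ++ recordFrom i (pre ++ [b]) rest

/-- Perfect recall. -/
def PerfectRecall : Prop :=
  ∀ (i : Fin G.n) (j : ℕ), j < G.m i →
    ∀ h ∈ G.Info i j, ∀ h' ∈ G.Info i j, G.recordFrom i [] h = G.recordFrom i [] h'

/-- Product of the move probabilities along `rest`, continuing from the prefix `pre`. -/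
def prodAlong (β : G.Profile) : List ℕ → List ℕ → ℝ
  | _, [] => 1
  | pre, b :: rest => G.moveProb β pre b * prodAlong β (pre ++ [b]) rest

/-- `ω(h|β)`: the probability that the moves along `h` are played under `β`. -/
def omega (β : G.Profile) (h : List ℕ) : ℝ := G.prodAlong β [] h

/-- `ω(I_i^j|β)`. -/
def omegaInfo (i : Fin G.n) (j : ℕ) (β : G.Profile) : ℝ := ∑ h ∈ G.Info i j, G.omega β h

/-- Product of the move probabilities along `rest` from `pre`, disregarding player `i`'s
own moves. -/
def prodAlongNot (i : Fin G.n) (β : G.Profile) : List ℕ → List ℕ → ℝ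
  | _, [] => 1
  | pre, b :: rest =>
    (if G.P pre = some i then 1 else G.moveProb β pre b) * prodAlongNot i β (pre ++ [b]) rest

/-- `S^i(h|β)`: probability of the moves along `h`, disregarding player `i`'s own moves. -/
def Sh (i : Fin G.n) (β : G.Profile) (h : List ℕ) : ℝ := G.prodAlongNot i β [] h

/-- `S^i(I_i^j|β)`. -/
def SInfo (i : Fin G.n) (j : ℕ) (β : G.Profile) : ℝ := ∑ h ∈ G.Info i j, G.Sh i β h

/-- Product of the move probabilities along `rest` from `pre`, with the factor at prefixes
lying in `I_i^j` omitted. -/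
def prodAlongSkip (i : Fin G.n) (j : ℕ) (β : G.Profile) : List ℕ → List ℕ → ℝ
  | _, [] => 1
  | pre, b :: rest =>
    (if pre ∈ G.Info i j then 1 else G.moveProb β pre b) * prodAlongSkip i j β (pre ++ [b]) rest

/-- `q ∈ M(a, I_i^j)`: `I_i^q` is a first information set of player `i` after action `a`
(every history in `I_i^q` contains `a`, with no later action of `a` lying in any action set
of player `i`). -/
def FirstAfter (i : Fin G.n) (a : ℕ) (q : ℕ) : Prop :=
  q < G.m i ∧ ∀ h ∈ G.Info i q, ∃ l₁ l₂ : List ℕ,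
    h = l₁ ++ a :: l₂ ∧ ∀ b ∈ l₂, ∀ p < G.m i, b ∉ G.infoA i p

/-- `q ∈ M(I_i^j) = ∪_{a ∈ A(I_i^j)} M(a, I_i^j)`. -/
def MInfo (i : Fin G.n) (j : ℕ) (q : ℕ) : Prop := ∃ a ∈ G.infoA i j, G.FirstAfter i a q

/-- `q ∈ Λ(a, I_i^j)`: every history in `I_i^q` contains the action `a`. -/
def LambdaSet (i : Fin G.n) (a : ℕ) (q : ℕ) : Prop :=
  q < G.m i ∧ ∀ h ∈ G.Info i q, ∃ l₁ l₂ : List ℕ, h = l₁ ++ a :: l₂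

/-- `ϱ^i_{I_i^j}(β, β̃)`: replace player `i`'s component of `β` by that of `β̃` at every
information set `I_i^q` such that some history in `I_i^q` contains an action of `A(I_i^j)`. -/
def rho (i : Fin G.n) (j : ℕ) (β βt : G.Profile) : G.Profile := fun p q =>
  if p = i ∧ ∃ h ∈ G.Info i q, ∃ b ∈ h, b ∈ G.infoA i j then βt i q else β p q

/-- A belief system: a probability distribution on each information set. -/
def IsBelief (μ : G.Belief) : Prop :=
  ∀ (i : Fin G.n) (j : ℕ), j < G.m i →
    (∀ h ∈ G.Info i j, 0 ≤ μ i j h) ∧ ∑ h ∈ G.Info i j, μ i j h = 1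

/-- A self-independent belief system for `β`:
`S^i(I_i^j|β) · μ^i_{I_i^j}(h) = S^i(h|β)`. -/
def SelfIndep (β : G.Profile) (μ : G.Belief) : Prop :=
  ∀ (i : Fin G.n) (j : ℕ), j < G.m i → ∀ h ∈ G.Info i j,
    G.SInfo i j β * μ i j h = G.Sh i β h

/-- Auxiliary for `ν`: scan `rest` from `pre` for the subhistory lying in `I_i^j`, then
weight by the belief and multiply the move probabilities of the remaining moves (the move
taken at the subhistory itself being skipped). -/
def nuAux (i : Fin G.n) (j : ℕ) (β : G.Profile) (w : List ℕ → ℝ) : List ℕ → List ℕ → ℝ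
  | _, [] => 0
  | pre, b :: rest =>
    if pre ∈ G.Info i j then w pre * G.prodAlong β (pre ++ [b]) rest
    else nuAux i j β w (pre ++ [b]) rest

/-- `ν^i_{I_i^j}(h | a, β^{-I_i^j}, μ)` (it does not involve the component of `β` at
`I_i^j`). -/
def nu (i : Fin G.n) (j : ℕ) (β : G.Profile) (μ : G.Belief) (h : List ℕ) : ℝ :=
  G.nuAux i j β (μ i j) [] h

/-- `u^i((a, β^{-I_i^j}) ∧ I_i^j)`. -/
def uWedgeAct (i : Fin G.n) (j : ℕ) (a : ℕ) (β : G.Profile) : ℝ :=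
  ∑ h ∈ G.Zset.filter (fun h => a ∈ h), G.u i h * G.prodAlongSkip i j β [] h

/-- `u^i(β ∧ I_i^j)`. -/
def uWedge (i : Fin G.n) (j : ℕ) (β : G.Profile) : ℝ :=
  ∑ h ∈ G.Zset.filter (fun h => ∃ b ∈ h, b ∈ G.infoA i j), G.u i h * G.omega β h

/-- The conditional expected payoff `u^i(a, β^{-I_i^j}, μ | I_i^j)`. -/
def uCond (i : Fin G.n) (j : ℕ) (a : ℕ) (β : G.Profile) (μ : G.Belief) : ℝ :=
  ∑ h ∈ G.Zset.filter (fun h => a ∈ h), G.u i h * G.nu i j β μ h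

/-- The expected payoff `u^i(β)`. -/
def uExp (i : Fin G.n) (β : G.Profile) : ℝ := ∑ h ∈ G.Zset, G.u i h * G.omega β h

/-- The profile obtained from `β` by replacing all of player `i`'s components by `b`. -/
def replace (β : G.Profile) (i : Fin G.n) (b : ℕ → ℕ → ℝ) : G.Profile :=
  fun p => if p = i then b else β p

/-- `β` is a Nash equilibrium in behavioral strategies. -/
def IsNash (β : G.Profile) : Prop :=
  G.IsBehProfile β ∧ ∀ (i : Fin G.n) (b : ℕ → ℕ → ℝ), G.IsBehStrategy i b →
    G.uExp i (G.replace β i b) ≤ G.uExp i β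

/-- `(β, β̃, μ)` satisfies the Nash characterization (Definition 2 of the paper). -/
def NashChar (β βt : G.Profile) (μ : G.Belief) : Prop :=
  (∀ (i : Fin G.n) (j : ℕ), j < G.m i → ∀ a' ∈ G.infoA i j, ∀ a'' ∈ G.infoA i j,
    G.uWedgeAct i j a' (G.rho i j β βt) < G.uWedgeAct i j a'' (G.rho i j β βt) →
    β i j a' = 0) ∧
  (∀ (i : Fin G.n) (j : ℕ), j < G.m i → ∀ a' ∈ G.infoA i j, ∀ a'' ∈ G.infoA i j,
    G.uCond i j a' (G.rho i j β βt) μ < G.uCond i j a'' (G.rho i j β βt) μ →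
    βt i j a' = 0) ∧
  G.IsBelief μ ∧ G.SelfIndep β μ

/-- `r` is the root of a subgame: every information set lies entirely inside or entirely
outside the set of histories extending `r`. -/
def IsSubgameRoot (r : List ℕ) : Prop :=
  r ∈ G.H ∧ ∀ (i : Fin G.n) (j : ℕ), j < G.m i →
    (∀ h ∈ G.Info i j, r <+: h) ∨ ∀ h ∈ G.Info i j, ¬ r <+: h

/-- The depth `g` of the smallest subgame containing `A(I_i^j)` (the length of the longest
subgame root preceding every history of `I_i^j`). -/
def sgDepthInfo (i : Fin G.n) (j : ℕ) : ℕ :=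
  (G.H.filter fun r => G.IsSubgameRoot r ∧ ∀ h ∈ G.Info i j, r <+: h).sup List.length

/-- The depth `q(h)` of the smallest subgame containing the last action of `h`. -/
def sgDepthHist (h : List ℕ) : ℕ :=
  (G.H.filter fun r => G.IsSubgameRoot r ∧ r <+: h.dropLast).sup List.length

/-- `C^i_{I_i^j}(h|β)`: product of move probabilities along `h` within the smallest subgame
containing `A(I_i^j)`. -/
def Ch (i : Fin G.n) (j : ℕ) (β : G.Profile) (h : List ℕ) : ℝ :=
  G.prodAlong β (h.take (G.sgDepthInfo i j)) (h.drop (G.sgDepthInfo i j))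

/-- `C^i_{I_i^j}(I_i^j|β)`. -/
def CInfo (i : Fin G.n) (j : ℕ) (β : G.Profile) : ℝ := ∑ h ∈ G.Info i j, G.Ch i j β h

/-- `u^i((a, β^{-I_i^j}) ⋄ I_i^j)`. -/
def uDiamondAct (i : Fin G.n) (j : ℕ) (a : ℕ) (β : G.Profile) : ℝ :=
  ∑ h ∈ G.Zset.filter (fun h => a ∈ h), G.u i h *
    G.prodAlongSkip i j β (h.take (G.sgDepthInfo i j)) (h.drop (G.sgDepthInfo i j))

/-- `Y^i(h|β)`: like `S^i(h|β)` but within the smallest subgame containing the last action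
of `h`. -/
def Yh (i : Fin G.n) (β : G.Profile) (h : List ℕ) : ℝ :=
  G.prodAlongNot i β (h.take (G.sgDepthHist h)) (h.drop (G.sgDepthHist h))

/-- `Y^i(I_i^j|β)`. -/
def YInfo (i : Fin G.n) (j : ℕ) (β : G.Profile) : ℝ := ∑ h ∈ G.Info i j, G.Yh i β h

/-- The belief condition `Y^i(I_i^j|β) · μ^i_{I_i^j}(h) = Y^i(h|β)`. -/
def YConsistent (β : G.Profile) (μ : G.Belief) : Prop :=
  ∀ (i : Fin G.n) (j : ℕ), j < G.m i → ∀ h ∈ G.Info i j,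
    G.YInfo i j β * μ i j h = G.Yh i β h

/-- The expected payoff of player `i` in the subgame rooted at `r` (payoffs of terminal
histories extending `r`, weighted by the move probabilities within the subgame). -/
def uExpFrom (i : Fin G.n) (β : G.Profile) (r : List ℕ) : ℝ :=
  ∑ h ∈ G.Zset.filter (fun h => r <+: h), G.u i h * G.prodAlong β r (h.drop r.length)

/-- `β` is a subgame perfect equilibrium in behavioral strategies: its restriction to every
subgame is a Nash equilibrium in behavioral strategies of that subgame. -/
def IsSubgamePerfect (β : G.Profile) : Prop :=
  G.IsBehProfile β ∧ ∀ r : List ℕ, G.IsSubgameRoot r →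
    ∀ (i : Fin G.n) (b : ℕ → ℕ → ℝ), G.IsBehStrategy i b →
      G.uExpFrom i (G.replace β i b) r ≤ G.uExpFrom i β r

/-- `(β, β̃, μ)` satisfies the subgame perfect characterization (Definition 6 of the
paper). -/
def SubgameChar (β βt : G.Profile) (μ : G.Belief) : Prop :=
  (∀ (i : Fin G.n) (j : ℕ), j < G.m i → ∀ a' ∈ G.infoA i j, ∀ a'' ∈ G.infoA i j,
    G.uDiamondAct i j a' (G.rho i j β βt) < G.uDiamondAct i j a'' (G.rho i j β βt) →
    β i j a' = 0) ∧
  (∀ (i : Fin G.n) (j : ℕ), j < G.m i → ∀ a' ∈ G.infoA i j, ∀ a'' ∈ G.infoA i j,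
    G.uCond i j a' (G.rho i j β βt) μ < G.uCond i j a'' (G.rho i j β βt) μ →
    βt i j a' = 0) ∧
  G.IsBelief μ ∧ G.YConsistent β μ

/-- `(β, μ)` is a semi-sequential equilibrium. -/
def SemiSeqEq (β : G.Profile) (μ : G.Belief) : Prop :=
  G.IsBehProfile β ∧ G.IsBelief μ ∧ G.SelfIndep β μ ∧
  ∀ (i : Fin G.n) (j : ℕ), j < G.m i → ∀ a' ∈ G.infoA i j, ∀ a'' ∈ G.infoA i j,
    G.uCond i j a' β μ < G.uCond i j a'' β μ → β i j a' = 0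

/-- `(β, μ)` is a subgame perfect semi-sequential equilibrium. -/
def SubgameSemiSeqEq (β : G.Profile) (μ : G.Belief) : Prop :=
  G.IsBehProfile β ∧ G.IsBelief μ ∧ G.YConsistent β μ ∧
  ∀ (i : Fin G.n) (j : ℕ), j < G.m i → ∀ a' ∈ G.infoA i j, ∀ a'' ∈ G.infoA i j,
    G.uCond i j a' β μ < G.uCond i j a'' β μ → β i j a' = 0

/-- `d(I_i^j)`: the number of information sets of player `i` containing a prefix of some
history of `I_i^j` (counting `I_i^j` itself). -/
def dInfo (i : Fin G.n) (j : ℕ) : ℕ :=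
  ((Finset.range (G.m i)).filter
    (fun q => ∃ h ∈ G.Info i j, ∃ p : List ℕ, p <+: h ∧ p ∈ G.Info i q)).card

end EFG

/-!
Fix a player. By perfect recall every terminal history through one of his information sets `I`
carries the same sequence of own moves up to `I`, so with a self-independent belief the payoff of
an action accumulated over the histories through `I` is the probability of reaching `I` times its
conditional payoff. Hence, as long as the information sets after `I` are played by `β̃`, both `β`
and `β̃` choose at `I` only actions of maximal accumulated payoff (any action, if `I` is not
reached), and exchanging one for the other at `I` does not change the payoff accumulated there.
Now start from `β` and pass to `β̃` at the information sets following `I_i^j`, one at a time and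
later ones first. Each single exchange affects only the histories through the set concerned, which
all go through `I_i^j`, so `u^i(· ∧ I_i^j)` stays the same throughout.
-/

theorem sum_mul_eq_sum_mul_of_argmax {ι R : Type*} [NonUnitalNonAssocSemiring R] [LinearOrder R]
    {s : Finset ι} {b b' v : ι → R} (hsum : ∑ a ∈ s, b a = ∑ a ∈ s, b' a)
    (hb : ∀ a ∈ s, ∀ a' ∈ s, v a < v a' → b a = 0)
    (hb' : ∀ a ∈ s, ∀ a' ∈ s, v a < v a' → b' a = 0) :
    ∑ a ∈ s, b a * v a = ∑ a ∈ s, b' a * v a := by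
  obtain rfl | hs := s.eq_empty_or_nonempty
  · rfl
  obtain ⟨m, hm, hmax⟩ := s.exists_max_image v hs
  have sum_eq_mul_max : ∀ c : ι → R, (∀ a ∈ s, ∀ a' ∈ s, v a < v a' → c a = 0) →
      ∑ a ∈ s, c a * v a = (∑ a ∈ s, c a) * v m := by
    intro c hc
    rw [Finset.sum_mul]
    refine Finset.sum_congr rfl fun a ha => ?_
    obtain hlt | heq := (hmax a ha).lt_or_eq
    · rw [hc a ha m hm hlt, zero_mul, zero_mul]
    · rw [heq]
  rw [sum_eq_mul_max b hb, sum_eq_mul_max b' hb', hsum]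

namespace EFG

section

variable {G : EFG} {i : Fin G.n} {j q : ℕ} {h s t z : List ℕ} {a b : ℕ}

/-! ### Histories and information sets -/

theorem mem_H_of_prefix (hst : s <+: t) (ht : t ∈ G.H) : s ∈ G.H :=
  G.prefixClosed t ht s hst

theorem mem_H_of_mem_Info (hj : j < G.m i) (hh : h ∈ G.Info i j) : h ∈ G.H :=
  ((G.info_spec i j h hj).1 hh).1

theorem P_eq_of_mem_Info (hj : j < G.m i) (hh : h ∈ G.Info i j) : G.P h = some i :=
  ((G.info_spec i j h hj).1 hh).2.1

theorem infoIdx_eq_of_mem_Info (hj : j < G.m i) (hh : h ∈ G.Info i j) : G.infoIdx h = j :=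
  ((G.info_spec i j h hj).1 hh).2.2.2

theorem infoIdx_lt_of_append_mem_H (hH : h ++ [a] ∈ G.H) (hP : G.P h = some i) :
    G.infoIdx h < G.m i :=
  G.infoIdx_lt i h (mem_H_of_prefix (List.prefix_append _ _) hH) hP ⟨a, hH⟩

theorem mem_Info_infoIdx (hH : h ++ [a] ∈ G.H) (hP : G.P h = some i) :
    h ∈ G.Info i (G.infoIdx h) :=
  (G.info_spec i _ h (infoIdx_lt_of_append_mem_H hH hP)).2
    ⟨mem_H_of_prefix (List.prefix_append _ _) hH, hP, ⟨a, hH⟩, rfl⟩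

theorem mem_infoA_iff : a ∈ G.infoA i j ↔ ∃ h ∈ G.Info i j, h ++ [a] ∈ G.H := by
  simp only [infoA, Finset.mem_sup, A, Finset.mem_filter]
  exact exists_congr fun h => and_congr_right fun _ => and_iff_right_of_imp (G.act_mem h a)

theorem exists_eq_append_of_mem_infoA (hj : j < G.m i) (hz : z ∈ G.H) (haz : a ∈ z)
    (ha : a ∈ G.infoA i j) : ∃ s ∈ G.Info i j, ∃ t, z = s ++ a :: t := by
  obtain ⟨s, t, rfl⟩ := List.append_of_mem haz
  obtain ⟨h, hh, hha⟩ := mem_infoA_iff.1 ha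
  have hsa : s ++ [a] ∈ G.H := mem_H_of_prefix ⟨t, by simp⟩ hz
  have hs : s ∈ G.H := mem_H_of_prefix (List.prefix_append _ _) hsa
  obtain ⟨hP, hidx⟩ := G.act_unique s h a hs (mem_H_of_mem_Info hj hh) hsa hha
  exact ⟨s, (G.info_spec i j s hj).2 ⟨hs, hP.trans (P_eq_of_mem_Info hj hh), ⟨a, hsa⟩,
    hidx.trans (infoIdx_eq_of_mem_Info hj hh)⟩, t, rfl⟩

variable (G) in
/-- The history `z` passes through the information set `I_i^j`, that is, it contains a move made
there. As actions determine the information set at which they are available, this is expressed,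
as in the definition of `u^i(β ∧ I_i^j)`, by `z` containing an action of `A(I_i^j)`. -/
def Passes (i : Fin G.n) (j : ℕ) (z : List ℕ) : Prop := ∃ b ∈ z, b ∈ G.infoA i j

variable (G) in
/-- The information set `I_i^q` comes after `I_i^j` for player `i`: the relation that selects the
components replaced by `ϱ^i_{I_i^j}`. -/
def Follows (i : Fin G.n) (j q : ℕ) : Prop := ∃ h ∈ G.Info i q, G.Passes i j h

theorem passes_iff (hj : j < G.m i) (hz : z ∈ G.H) :
    G.Passes i j z ↔ ∃ s ∈ G.Info i j, ∃ a t, z = s ++ a :: t := by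
  constructor
  · rintro ⟨a, haz, ha⟩
    obtain ⟨s, hs, t, rfl⟩ := exists_eq_append_of_mem_infoA hj hz haz ha
    exact ⟨s, hs, a, t, rfl⟩
  · rintro ⟨s, hs, a, t, rfl⟩
    exact ⟨a, by simp, mem_infoA_iff.2 ⟨s, hs, mem_H_of_prefix ⟨t, by simp⟩ hz⟩⟩

theorem Passes.of_prefix (hs : G.Passes i j s) (hst : s <+: t) : G.Passes i j t :=
  let ⟨a, has, ha⟩ := hs
  ⟨a, hst.subset has, ha⟩

theorem passes_of_prefix_of_ne (hj : j < G.m i) (hs : s ∈ G.Info i j) (ht : t ∈ G.H)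
    (hst : s <+: t) (hne : s ≠ t) : G.Passes i j t := by
  obtain ⟨_ | ⟨a, r⟩, rfl⟩ := hst
  · simp at hne
  · exact (passes_iff hj ht).2 ⟨s, hs, a, r, rfl⟩

theorem Passes.eq_or_follows (hj : j < G.m i) (hq : q < G.m i) (hz : z ∈ G.H)
    (hjz : G.Passes i j z) (hqz : G.Passes i q z) :
    j = q ∨ G.Follows i j q ∨ G.Follows i q j := by
  obtain ⟨s, hs, a, t, rfl⟩ := (passes_iff hj hz).1 hjz
  obtain ⟨r, hr, b, t', hrt⟩ := (passes_iff hq hz).1 hqz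
  by_cases hsr : s = r
  · exact .inl (infoIdx_eq_of_mem_Info hj hs ▸ hsr ▸ infoIdx_eq_of_mem_Info hq (hsr ▸ hr))
  obtain hpre | hpre :=
    List.prefix_or_prefix_of_prefix (List.prefix_append s (a :: t)) ⟨b :: t', hrt.symm⟩
  · exact .inr (.inl
      ⟨r, hr, passes_of_prefix_of_ne hj hs (mem_H_of_mem_Info hq hr) hpre hsr⟩)
  · exact .inr (.inr
      ⟨s, hs, passes_of_prefix_of_ne hq hr (mem_H_of_mem_Info hj hs) hpre (Ne.symm hsr)⟩)

/-! ### Perfect recall -/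

variable (G) in
/-- Perfect recall of the single player `i`; `G.PerfectRecall` demands it of every player. -/
def PerfectRecallOf (i : Fin G.n) : Prop :=
  ∀ j < G.m i, ∀ h ∈ G.Info i j, ∀ h' ∈ G.Info i j, G.recordFrom i [] h = G.recordFrom i [] h'

theorem mem_recordFrom_iff {pre rest : List ℕ} :
    (q, a) ∈ G.recordFrom i pre rest ↔ ∃ s t, rest = s ++ a :: t ∧
      G.P (pre ++ s) = some i ∧ G.infoIdx (pre ++ s) = q := by
  induction rest generalizing pre with
  | nil => simp [recordFrom]
  | cons b rest ih =>
    have head_iff : (q, a) ∈ (if G.P pre = some i then [(G.infoIdx pre, b)] else []) ↔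
        b = a ∧ G.P pre = some i ∧ G.infoIdx pre = q := by
      split_ifs with hP <;> simp [hP, eq_comm, and_comm]
    rw [recordFrom, List.mem_append, ih, head_iff]
    constructor
    · rintro (⟨rfl, hP, hidx⟩ | ⟨s, t, rfl, hP, hidx⟩)
      · exact ⟨[], rest, rfl, by simpa using hP, by simpa using hidx⟩
      · exact ⟨b :: s, t, rfl, by simpa using hP, by simpa using hidx⟩
    · rintro ⟨_ | ⟨c, s⟩, t, heq, hP, hidx⟩
      · exact .inl ⟨(List.cons.inj heq).1, by simpa using hP, by simpa using hidx⟩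
      · obtain ⟨rfl, rfl⟩ := List.cons.inj heq
        exact .inr ⟨s, t, rfl, by simpa using hP, by simpa using hidx⟩

theorem passes_iff_exists_mem_recordFrom (hj : j < G.m i) (hz : z ∈ G.H) :
    G.Passes i j z ↔ ∃ a, (j, a) ∈ G.recordFrom i [] z := by
  simp only [passes_iff hj hz, mem_recordFrom_iff, List.nil_append]
  constructor
  · rintro ⟨s, hs, a, t, rfl⟩
    exact ⟨a, s, t, rfl, P_eq_of_mem_Info hj hs, infoIdx_eq_of_mem_Info hj hs⟩
  · rintro ⟨a, s, t, rfl, hP, rfl⟩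
    exact ⟨s, mem_Info_infoIdx (a := a) (mem_H_of_prefix ⟨t, by simp⟩ hz) hP, a, t, rfl⟩

theorem Follows.passes_of_mem_Info (hf : G.Follows i j q) (hPR : G.PerfectRecallOf i)
    (hj : j < G.m i) (hq : q < G.m i) (hh : h ∈ G.Info i q) : G.Passes i j h := by
  obtain ⟨h', hh', hpass⟩ := hf
  rw [passes_iff_exists_mem_recordFrom hj (mem_H_of_mem_Info hq hh')] at hpass
  rwa [passes_iff_exists_mem_recordFrom hj (mem_H_of_mem_Info hq hh), hPR q hq h hh h' hh']

theorem Follows.passes_of_passes (hf : G.Follows i j q) (hPR : G.PerfectRecallOf i)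
    (hj : j < G.m i) (hq : q < G.m i) (hz : z ∈ G.H) (hqz : G.Passes i q z) :
    G.Passes i j z := by
  obtain ⟨s, hs, a, t, rfl⟩ := (passes_iff hq hz).1 hqz
  exact (hf.passes_of_mem_Info hPR hj hq hs).of_prefix (List.prefix_append _ _)

theorem Follows.trans {r : ℕ} (hjq : G.Follows i j q) (hqr : G.Follows i q r)
    (hPR : G.PerfectRecallOf i) (hj : j < G.m i) (hq : q < G.m i) (hr : r < G.m i) :
    G.Follows i j r :=
  let ⟨h, hh, hqh⟩ := hqr
  ⟨h, hh, hjq.passes_of_passes hPR hj hq (mem_H_of_mem_Info hr hh) hqh⟩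

theorem exists_mem_forall_not_follows (hPR : G.PerfectRecallOf i) {T : Finset ℕ}
    (hT : ∀ q ∈ T, q < G.m i) (hne : T.Nonempty) : ∃ q ∈ T, ∀ j ∈ T, ¬ G.Follows i j q := by
  have hU : (T.biUnion (G.Info i)).Nonempty :=
    hne.biUnion fun q hq => G.info_nonempty i q (hT q hq)
  obtain ⟨h, hh, hmin⟩ := (T.biUnion (G.Info i)).exists_min_image List.length hU
  obtain ⟨q, hq, hhq⟩ := Finset.mem_biUnion.1 hh
  refine ⟨q, hq, fun j hj hf => ?_⟩
  have hpass := hf.passes_of_mem_Info hPR (hT j hj) (hT q hq) hhq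
  obtain ⟨s, hs, a, t, rfl⟩ := (passes_iff (hT j hj) (mem_H_of_mem_Info (hT q hq) hhq)).1 hpass
  have hle := hmin s (Finset.mem_biUnion.2 ⟨j, hj, hs⟩)
  simp at hle

theorem not_follows_self (hPR : G.PerfectRecallOf i) (hj : j < G.m i) : ¬ G.Follows i j j := by
  simpa using exists_mem_forall_not_follows hPR (T := {j}) (by simpa using hj) (by simp)

theorem eq_of_prefix_of_mem_Info (hPR : G.PerfectRecallOf i) (hj : j < G.m i)
    (hs : s ∈ G.Info i j) (ht : t ∈ G.Info i j) (hst : s <+: t) : s = t := by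
  by_contra hne
  exact not_follows_self hPR hj
    ⟨t, ht, passes_of_prefix_of_ne hj hs (mem_H_of_mem_Info hj ht) hst hne⟩

theorem eq_of_mem_infoA_of_mem (hPR : G.PerfectRecallOf i) (hj : j < G.m i) (hz : z ∈ G.H)
    (haz : a ∈ z) (hbz : b ∈ z) (ha : a ∈ G.infoA i j) (hb : b ∈ G.infoA i j) : a = b := by
  obtain ⟨s, hs, t, rfl⟩ := exists_eq_append_of_mem_infoA hj hz haz ha
  obtain ⟨s', hs', t', heq⟩ := exists_eq_append_of_mem_infoA hj hz hbz hb
  have hss' : s = s' := by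
    obtain hpre | hpre :=
      List.prefix_or_prefix_of_prefix (List.prefix_append s (a :: t)) ⟨b :: t', heq.symm⟩
    · exact eq_of_prefix_of_mem_Info hPR hj hs hs' hpre
    · exact (eq_of_prefix_of_mem_Info hPR hj hs' hs hpre).symm
  subst hss'
  exact (List.cons.inj (List.append_cancel_left heq)).1

/-! ### Move probabilities along a history -/

variable {γ γ' : G.Profile} {pre rest : List ℕ}

theorem moveProb_of_mem_Info (hj : j < G.m i) (hs : s ∈ G.Info i j) :
    G.moveProb γ s a = γ i j a := by
  simp [moveProb, P_eq_of_mem_Info hj hs, infoIdx_eq_of_mem_Info hj hs]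

theorem prodAlong_append (l₁ l₂ : List ℕ) :
    G.prodAlong γ pre (l₁ ++ l₂) = G.prodAlong γ pre l₁ * G.prodAlong γ (pre ++ l₁) l₂ := by
  induction l₁ generalizing pre with
  | nil => simp [prodAlong]
  | cons b l ih => simp [prodAlong, ih, mul_assoc]

theorem prodAlongSkip_append (l₁ l₂ : List ℕ) :
    G.prodAlongSkip i j γ pre (l₁ ++ l₂) =
      G.prodAlongSkip i j γ pre l₁ * G.prodAlongSkip i j γ (pre ++ l₁) l₂ := by
  induction l₁ generalizing pre with
  | nil => simp [prodAlongSkip]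
  | cons b l ih => simp [prodAlongSkip, ih, mul_assoc]

theorem prodAlongSkip_eq_prodAlong
    (hnot : ∀ s b, s ++ [b] <+: rest → pre ++ s ∉ G.Info i j) :
    G.prodAlongSkip i j γ pre rest = G.prodAlong γ pre rest := by
  induction rest generalizing pre with
  | nil => rfl
  | cons c rest ih =>
    have hpre : pre ∉ G.Info i j := by simpa using hnot [] c (by simp)
    rw [prodAlongSkip, prodAlong, if_neg hpre, ih fun s b hs => ?_]
    simpa using hnot (c :: s) b (by simpa using hs)

theorem nuAux_append {w : List ℕ → ℝ} (l₁ l₂ : List ℕ)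
    (hnot : ∀ s b, s ++ [b] <+: l₁ → pre ++ s ∉ G.Info i j) :
    G.nuAux i j γ w pre (l₁ ++ l₂) = G.nuAux i j γ w (pre ++ l₁) l₂ := by
  induction l₁ generalizing pre with
  | nil => simp
  | cons c l ih =>
    have hpre : pre ∉ G.Info i j := by simpa using hnot [] c (by simp)
    rw [List.cons_append, nuAux, if_neg hpre, ih fun s b hs => ?_]
    · simp
    · simpa using hnot (c :: s) b (by simpa using hs)

theorem prodAlong_congr
    (hγ : ∀ s b, s ++ [b] <+: rest → G.moveProb γ (pre ++ s) b = G.moveProb γ' (pre ++ s) b) :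
    G.prodAlong γ pre rest = G.prodAlong γ' pre rest := by
  induction rest generalizing pre with
  | nil => rfl
  | cons c rest ih =>
    have hpre : G.moveProb γ pre c = G.moveProb γ' pre c := by simpa using hγ [] c (by simp)
    rw [prodAlong, prodAlong, hpre, ih fun s b hs => ?_]
    simpa using hγ (c :: s) b (by simpa using hs)

theorem prodAlongSkip_congr
    (hγ : ∀ s b, s ++ [b] <+: rest → pre ++ s ∉ G.Info i j →
      G.moveProb γ (pre ++ s) b = G.moveProb γ' (pre ++ s) b) :
    G.prodAlongSkip i j γ pre rest = G.prodAlongSkip i j γ' pre rest := by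
  induction rest generalizing pre with
  | nil => rfl
  | cons c rest ih =>
    have hpre : (if pre ∈ G.Info i j then 1 else G.moveProb γ pre c) =
        if pre ∈ G.Info i j then 1 else G.moveProb γ' pre c :=
      ite_congr rfl (fun _ => rfl) fun hmem => by
        simpa using hγ [] c (by simp) (by simpa using hmem)
    rw [prodAlongSkip, prodAlongSkip, hpre, ih fun s b hs hmem => ?_]
    simpa using hγ (c :: s) b (by simpa using hs) (by simpa using hmem)

theorem prodAlongNot_congr
    (hγ : ∀ h b, G.P h ≠ some i → G.moveProb γ h b = G.moveProb γ' h b) :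
    G.prodAlongNot i γ pre rest = G.prodAlongNot i γ' pre rest := by
  induction rest generalizing pre with
  | nil => rfl
  | cons c rest ih =>
    rw [prodAlongNot, prodAlongNot, ih, ite_congr rfl (fun _ => rfl) (hγ pre c)]

theorem prodAlong_eq_prodAlongNot_mul :
    G.prodAlong γ pre rest = G.prodAlongNot i γ pre rest *
      ((G.recordFrom i pre rest).map fun x => γ i x.1 x.2).prod := by
  induction rest generalizing pre with
  | nil => simp [prodAlong, prodAlongNot, recordFrom]
  | cons b rest ih =>
    rw [prodAlong, prodAlongNot, recordFrom, ih]
    by_cases hP : G.P pre = some i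
    · simp [moveProb, hP, mul_left_comm]
    · simp [hP, mul_assoc]

theorem IsBehProfile.moveProb_nonneg (hγ : G.IsBehProfile γ) (hH : h ++ [a] ∈ G.H) :
    0 ≤ G.moveProb γ h a := by
  unfold moveProb
  cases hP : G.P h with
  | none => exact G.fc_nonneg h a
  | some p =>
    exact (hγ p _ (infoIdx_lt_of_append_mem_H hH hP)).1 a
      (mem_infoA_iff.2 ⟨h, mem_Info_infoIdx hH hP, hH⟩)

theorem IsBehProfile.prodAlong_nonneg (hγ : G.IsBehProfile γ) (hH : pre ++ rest ∈ G.H) :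
    0 ≤ G.prodAlong γ pre rest := by
  induction rest generalizing pre with
  | nil => exact zero_le_one
  | cons b rest ih =>
    exact mul_nonneg (hγ.moveProb_nonneg (mem_H_of_prefix ⟨rest, by simp⟩ hH))
      (ih (by simpa using hH))

theorem IsBehProfile.omegaInfo_nonneg (hγ : G.IsBehProfile γ) (hj : j < G.m i) :
    0 ≤ G.omegaInfo i j γ :=
  Finset.sum_nonneg fun _ hh => hγ.prodAlong_nonneg (mem_H_of_mem_Info hj hh)

/-! ### Histories passing through an information set -/

section split

variable (hPR : G.PerfectRecallOf i) (hj : j < G.m i) (hs : s ∈ G.Info i j)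

include hPR hj hs

theorem notMem_Info_of_append_prefix (hr : h ++ [b] <+: s) : h ∉ G.Info i j := by
  intro hh
  have heq := eq_of_prefix_of_mem_Info hPR hj hh hs ((List.prefix_append _ _).trans hr)
  subst heq
  simpa using hr.length_le

theorem append_cons_notMem_Info : s ++ a :: t ∉ G.Info i j := by
  intro hh
  simpa using eq_of_prefix_of_mem_Info hPR hj hs hh (List.prefix_append _ _)

theorem prodAlongSkip_append_cons :
    G.prodAlongSkip i j γ [] (s ++ a :: t) = G.omega γ s * G.prodAlong γ (s ++ [a]) t := by
  rw [prodAlongSkip_append, List.nil_append, prodAlongSkip, if_pos hs, one_mul,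
    prodAlongSkip_eq_prodAlong fun h b hh => notMem_Info_of_append_prefix hPR hj hs hh,
    prodAlongSkip_eq_prodAlong fun h b _ => ?_, omega]
  simpa using append_cons_notMem_Info hPR hj hs

theorem omega_append_cons :
    G.omega γ (s ++ a :: t) = γ i j a * G.prodAlongSkip i j γ [] (s ++ a :: t) := by
  rw [prodAlongSkip_append_cons hPR hj hs, omega, prodAlong_append, List.nil_append, prodAlong,
    moveProb_of_mem_Info hj hs, omega, mul_left_comm]

theorem nu_append_cons {μ : G.Belief} :
    G.nu i j γ μ (s ++ a :: t) = μ i j s * G.prodAlong γ (s ++ [a]) t := by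
  rw [nu, nuAux_append s _ fun h b hh => notMem_Info_of_append_prefix hPR hj hs hh, nuAux,
    List.nil_append, if_pos hs]

end split

theorem mem_Zset_iff : z ∈ G.Zset ↔ z ∈ G.H ∧ ∀ a, z ++ [a] ∉ G.H := Finset.mem_filter

theorem uWedge_eq_sum_passes :
    G.uWedge i j γ = ∑ z ∈ G.Zset with G.Passes i j z, G.u i z * G.omega γ z := by
  unfold uWedge Passes
  congr!

theorem uWedge_eq_sum_uWedgeAct (hPR : G.PerfectRecallOf i) (hj : j < G.m i) :
    G.uWedge i j γ = ∑ a ∈ G.infoA i j, γ i j a * G.uWedgeAct i j a γ := by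
  have hunion : (G.Zset.filter fun z => ∃ b ∈ z, b ∈ G.infoA i j) =
      (G.infoA i j).biUnion fun a => G.Zset.filter fun z => a ∈ z := by
    ext z
    simp only [Finset.mem_filter, Finset.mem_biUnion]
    tauto
  rw [uWedge, hunion, Finset.sum_biUnion]
  · refine Finset.sum_congr rfl fun a ha => ?_
    rw [uWedgeAct, Finset.mul_sum]
    refine Finset.sum_congr rfl fun z hz => ?_
    obtain ⟨hzZ, haz⟩ := Finset.mem_filter.1 hz
    obtain ⟨s, hs, t, rfl⟩ := exists_eq_append_of_mem_infoA hj (mem_Zset_iff.1 hzZ).1 haz ha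
    rw [omega_append_cons hPR hj hs, mul_left_comm]
  · intro a ha b hb hab
    refine Finset.disjoint_left.2 fun z haz hbz => hab ?_
    obtain ⟨hzZ, haz⟩ := Finset.mem_filter.1 haz
    exact eq_of_mem_infoA_of_mem hPR hj (mem_Zset_iff.1 hzZ).1 haz (Finset.mem_filter.1 hbz).2 ha hb

theorem uWedge_eq_add_of_follows (hPR : G.PerfectRecallOf i) (hj : j < G.m i) (hq : q < G.m i)
    (hf : G.Follows i j q) :
    G.uWedge i j γ = G.uWedge i q γ +
      ∑ z ∈ G.Zset with G.Passes i j z ∧ ¬ G.Passes i q z, G.u i z * G.omega γ z := by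
  have hthrough : {z ∈ G.Zset | G.Passes i j z ∧ G.Passes i q z} =
      {z ∈ G.Zset | G.Passes i q z} :=
    Finset.filter_congr fun z hz => and_iff_right_of_imp
      (hf.passes_of_passes hPR hj hq (mem_Zset_iff.1 hz).1)
  rw [uWedge_eq_sum_passes, uWedge_eq_sum_passes, ← hthrough, ← Finset.filter_filter,
    ← Finset.filter_filter, Finset.sum_filter_add_sum_filter_not]

/-! ### Self-independent beliefs -/

section belief

variable {μ : G.Belief} (hPR : G.PerfectRecallOf i) (hj : j < G.m i)
  (hμ : ∀ h ∈ G.Info i j, G.SInfo i j γ * μ i j h = G.Sh i γ h)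

include hPR hj hμ

/- By perfect recall player `i`'s own moves contribute the same factor to every history of the
information set, so a self-independent belief obeys Bayes' rule. -/
theorem omegaInfo_mul_belief (hh : h ∈ G.Info i j) :
    G.omegaInfo i j γ * μ i j h = G.omega γ h := by
  set ownProb := ((G.recordFrom i [] h).map fun x => γ i x.1 x.2).prod
  have omega_eq : ∀ h' ∈ G.Info i j, G.omega γ h' = G.Sh i γ h' * ownProb := fun h' hh' => by
    rw [omega, prodAlong_eq_prodAlongNot_mul (i := i), hPR j hj h' hh' h hh, Sh]
  have omegaInfo_eq : G.omegaInfo i j γ = G.SInfo i j γ * ownProb := by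
    rw [omegaInfo, Finset.sum_congr rfl omega_eq, ← Finset.sum_mul, SInfo]
  rw [omegaInfo_eq, mul_right_comm, hμ h hh, omega_eq h hh]

theorem uWedgeAct_eq_omegaInfo_mul_uCond (ha : a ∈ G.infoA i j) :
    G.uWedgeAct i j a γ = G.omegaInfo i j γ * G.uCond i j a γ μ := by
  rw [uWedgeAct, uCond, Finset.mul_sum]
  refine Finset.sum_congr rfl fun z hz => ?_
  obtain ⟨hzZ, haz⟩ := Finset.mem_filter.1 hz
  obtain ⟨s, hs, t, rfl⟩ := exists_eq_append_of_mem_infoA hj (mem_Zset_iff.1 hzZ).1 haz ha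
  rw [prodAlongSkip_append_cons hPR hj hs, nu_append_cons hPR hj hs,
    ← omegaInfo_mul_belief hPR hj hμ hs]
  ring

end belief

end

/-! ### Switching strategies on a set of information sets -/

/-- The profile obtained from `β` by replacing player `i`'s components at the information sets
with index in `T` by those of `βt`; `ϱ^i_{I_i^j}` is the case of all information sets that follow
`I_i^j`. -/
def switch (G : EFG) (i : Fin G.n) (T : Set ℕ) (β βt : G.Profile) : G.Profile := fun p q =>
  if p = i ∧ q ∈ T then βt i q else β p q

section

variable {G : EFG} {i : Fin G.n} {j q : ℕ} {z : List ℕ} {β βt : G.Profile} {T T' : Set ℕ}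

theorem rho_eq_switch : G.rho i j β βt = G.switch i {q | G.Follows i j q} β βt := by
  unfold rho switch Follows Passes
  congr!

theorem switch_of_mem (hq : q ∈ T) : G.switch i T β βt i q = βt i q :=
  if_pos ⟨rfl, hq⟩

theorem switch_of_notMem (hq : q ∉ T) : G.switch i T β βt i q = β i q :=
  if_neg fun h => hq h.2

theorem switch_empty : G.switch i ∅ β βt = β := by
  funext p q
  simp [switch]

theorem IsBehProfile.switch (hβ : G.IsBehProfile β) (hβt : G.IsBehStrategy i (βt i)) :
    G.IsBehProfile (G.switch i T β βt) := by
  intro p q hq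
  by_cases h : p = i ∧ q ∈ T
  · obtain ⟨rfl, hqT⟩ := h
    simpa only [switch_of_mem hqT] using hβt q hq
  · simpa only [EFG.switch, if_neg h] using hβ p q hq

theorem moveProb_switch_congr {h : List ℕ} {a : ℕ}
    (hT : G.P h = some i → (G.infoIdx h ∈ T ↔ G.infoIdx h ∈ T')) :
    G.moveProb (G.switch i T β βt) h a = G.moveProb (G.switch i T' β βt) h a := by
  unfold moveProb
  cases hP : G.P h with
  | none => rfl
  | some p =>
    by_cases hp : p = i
    · subst hp
      simp [switch, hT hP]
    · simp [switch, hp]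

theorem Sh_switch : G.Sh i (G.switch i T β βt) = G.Sh i β := by
  funext h
  refine prodAlongNot_congr fun h b hP => ?_
  rw [moveProb_switch_congr (T' := ∅) fun hPi => absurd hPi hP, switch_empty]

theorem omega_switch_congr (hz : z ∈ G.H)
    (hT : ∀ q < G.m i, G.Passes i q z → (q ∈ T ↔ q ∈ T')) :
    G.omega (G.switch i T β βt) z = G.omega (G.switch i T' β βt) z := by
  refine prodAlong_congr fun s b hsb => moveProb_switch_congr fun hP => ?_
  have hH : s ++ [b] ∈ G.H := mem_H_of_prefix hsb hz
  exact hT _ (infoIdx_lt_of_append_mem_H hH hP)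
    ⟨b, hsb.subset (by simp), mem_infoA_iff.2 ⟨s, mem_Info_infoIdx hH hP, hH⟩⟩

theorem uWedge_switch_congr
    (hT : ∀ z ∈ G.Zset, G.Passes i j z → ∀ q < G.m i, G.Passes i q z → (q ∈ T ↔ q ∈ T')) :
    G.uWedge i j (G.switch i T β βt) = G.uWedge i j (G.switch i T' β βt) := by
  refine Finset.sum_congr rfl fun z hz => ?_
  obtain ⟨hzZ, hpass⟩ := Finset.mem_filter.1 hz
  rw [omega_switch_congr (mem_Zset_iff.1 hzZ).1 (hT z hzZ hpass)]

theorem uWedgeAct_switch_congr {a : ℕ} (hT : ∀ q ≠ j, q ∈ T ↔ q ∈ T') :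
    G.uWedgeAct i j a (G.switch i T β βt) = G.uWedgeAct i j a (G.switch i T' β βt) := by
  refine Finset.sum_congr rfl fun z hz => ?_
  have hzH : z ∈ G.H := (mem_Zset_iff.1 (Finset.mem_filter.1 hz).1).1
  rw [prodAlongSkip_congr fun s b hsb hs => moveProb_switch_congr fun hP => hT _ ?_]
  rintro rfl
  exact hs (mem_Info_infoIdx (mem_H_of_prefix hsb hzH) hP)

/-! ### The Nash characterization -/

variable {μ : G.Belief}

/-- The conditions that the Nash characterization imposes on `(β, β̃, μ)` at the information sets
of the single player `i`. -/
structure NashCharOf (G : EFG) (i : Fin G.n) (β βt : G.Profile) (μ : G.Belief) : Prop where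
  uWedgeAct_optimal : ∀ j < G.m i, ∀ a' ∈ G.infoA i j, ∀ a'' ∈ G.infoA i j,
    G.uWedgeAct i j a' (G.rho i j β βt) < G.uWedgeAct i j a'' (G.rho i j β βt) → β i j a' = 0
  uCond_optimal : ∀ j < G.m i, ∀ a' ∈ G.infoA i j, ∀ a'' ∈ G.infoA i j,
    G.uCond i j a' (G.rho i j β βt) μ < G.uCond i j a'' (G.rho i j β βt) μ → βt i j a' = 0
  selfIndep : ∀ j < G.m i, ∀ h ∈ G.Info i j, G.SInfo i j β * μ i j h = G.Sh i β h

theorem NashCharOf.uWedge_switch_insert (hchar : G.NashCharOf i β βt μ)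
    (hPR : G.PerfectRecallOf i) (hβ : G.IsBehProfile β) (hβt : G.IsBehStrategy i (βt i))
    (hj : j < G.m i) :
    G.uWedge i j (G.switch i (insert j {q | G.Follows i j q}) β βt) =
      G.uWedge i j (G.rho i j β βt) := by
  have hopt := hchar.uWedgeAct_optimal j hj
  have hoptCond := hchar.uCond_optimal j hj
  rw [rho_eq_switch] at hopt hoptCond ⊢
  set γ := G.switch i {q | G.Follows i j q} β βt
  have hμ : ∀ h ∈ G.Info i j, G.SInfo i j γ * μ i j h = G.Sh i γ h := by
    simpa only [SInfo, γ, Sh_switch] using hchar.selfIndep j hj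
  have hγj : γ i j = β i j := switch_of_notMem (not_follows_self hPR hj)
  have hact : ∀ a, G.uWedgeAct i j a (G.switch i (insert j {q | G.Follows i j q}) β βt) =
      G.uWedgeAct i j a γ := fun a =>
    uWedgeAct_switch_congr fun q hq => Set.mem_insert_iff.trans (or_iff_right hq)
  simp only [uWedge_eq_sum_uWedgeAct hPR hj, hact, hγj, switch_of_mem (Set.mem_insert j _)]
  refine sum_mul_eq_sum_mul_of_argmax ((hβt j hj).2.trans (hβ i j hj).2.symm)
    (fun a ha a' ha' hlt => hoptCond a ha a' ha' ?_) hopt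
  rw [uWedgeAct_eq_omegaInfo_mul_uCond hPR hj hμ ha,
    uWedgeAct_eq_omegaInfo_mul_uCond hPR hj hμ ha'] at hlt
  exact lt_of_mul_lt_mul_left hlt ((hβ.switch hβt).omegaInfo_nonneg hj)

section erase

variable {T : Finset ℕ}

theorem mem_iff_eq_or_follows_of_forall_not_follows (hT : ∀ q ∈ T, q < G.m i)
    (hupper : ∀ q ∈ T, ∀ r < G.m i, G.Follows i q r → r ∈ T) (hqT : q ∈ T)
    (hmin : ∀ r ∈ T, ¬ G.Follows i r q) (hz : z ∈ G.H) (hqz : G.Passes i q z) {r : ℕ}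
    (hr : r < G.m i) (hrz : G.Passes i r z) : r ∈ T ↔ r = q ∨ G.Follows i q r := by
  constructor
  · intro hrT
    obtain heq | hf | hf := hrz.eq_or_follows hr (hT q hqT) hz hqz
    · exact .inl heq
    · exact absurd hf (hmin r hrT)
    · exact .inr hf
  · rintro (rfl | hf)
    · exact hqT
    · exact hupper q hqT r hr hf

theorem uWedge_switch_erase (hPR : G.PerfectRecallOf i)
    (hlocal : ∀ q < G.m i, G.uWedge i q (G.switch i (insert q {r | G.Follows i q r}) β βt) =
      G.uWedge i q (G.rho i q β βt))
    (hj : j < G.m i) (hT : ∀ q ∈ T, q < G.m i)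
    (hupper : ∀ q ∈ T, ∀ r < G.m i, G.Follows i q r → r ∈ T) (hqT : q ∈ T)
    (hmin : ∀ r ∈ T, ¬ G.Follows i r q) (hf : G.Follows i j q) :
    G.uWedge i j (G.switch i (T.erase q) β βt) = G.uWedge i j (G.switch i T β βt) := by
  have hmem {z r} (hz : z ∈ G.Zset) (hqz : G.Passes i q z) (hr : r < G.m i)
      (hrz : G.Passes i r z) : r ∈ T ↔ r = q ∨ G.Follows i q r :=
    mem_iff_eq_or_follows_of_forall_not_follows hT hupper hqT hmin (mem_Zset_iff.1 hz).1 hqz hr hrz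
  have hthrough : G.uWedge i q (G.switch i (T.erase q) β βt) =
      G.uWedge i q (G.switch i T β βt) := calc
    _ = G.uWedge i q (G.switch i {r | G.Follows i q r} β βt) := by
      refine uWedge_switch_congr fun z hz hqz r hr hrz => ?_
      have hne : G.Follows i q r → r ≠ q := by
        rintro hqr rfl
        exact hmin r hqT hqr
      rw [Finset.mem_coe, Finset.mem_erase, hmem hz hqz hr hrz, Set.mem_ofPred_eq]
      tauto
    _ = G.uWedge i q (G.switch i (insert q {r | G.Follows i q r}) β βt) := by
      rw [hlocal q (hT q hqT), rho_eq_switch]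
    _ = G.uWedge i q (G.switch i T β βt) :=
      (uWedge_switch_congr fun z hz hqz r hr hrz => hmem hz hqz hr hrz).symm
  rw [uWedge_eq_add_of_follows hPR hj (hT q hqT) hf, hthrough,
    uWedge_eq_add_of_follows hPR hj (hT q hqT) hf]
  congr 1
  refine Finset.sum_congr rfl fun z hz => ?_
  obtain ⟨hzZ, -, hqz⟩ := Finset.mem_filter.1 hz
  rw [omega_switch_congr (T' := T) (mem_Zset_iff.1 hzZ).1 fun r _ hrz => ?_]
  have hne : r ≠ q := by
    rintro rfl
    exact hqz hrz
  simp [hne]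

theorem uWedge_switch_eq (hPR : G.PerfectRecallOf i)
    (hlocal : ∀ q < G.m i, G.uWedge i q (G.switch i (insert q {r | G.Follows i q r}) β βt) =
      G.uWedge i q (G.rho i q β βt))
    (hj : j < G.m i) (hT : ∀ q ∈ T, q < G.m i)
    (hupper : ∀ q ∈ T, ∀ r < G.m i, G.Follows i q r → r ∈ T)
    (hfollows : ∀ q ∈ T, G.Follows i j q) :
    G.uWedge i j (G.switch i T β βt) = G.uWedge i j β := by
  induction T using Finset.strongInduction with
  | H T ih =>
    obtain rfl | hne := T.eq_empty_or_nonempty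
    · rw [Finset.coe_empty, switch_empty]
    obtain ⟨q, hqT, hmin⟩ := exists_mem_forall_not_follows hPR hT hne
    rw [← uWedge_switch_erase hPR hlocal hj hT hupper hqT hmin (hfollows q hqT)]
    refine ih (T.erase q) (Finset.erase_ssubset hqT)
      (fun r hr => hT r (Finset.mem_of_mem_erase hr)) (fun r hr t ht hrt => ?_)
      (fun r hr => hfollows r (Finset.mem_of_mem_erase hr))
    have hrT := Finset.mem_of_mem_erase hr
    refine Finset.mem_erase.2 ⟨?_, hupper r hrT t ht hrt⟩
    rintro rfl
    exact hmin r hrT hrt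

end erase

end

end EFG

theorem stmt17_general (G : EFG) {i : Fin G.n} (hPR : G.PerfectRecallOf i)
    {β βt : G.Profile} {μ : G.Belief} (hβ : G.IsBehProfile β) (hβt : G.IsBehStrategy i (βt i))
    (hchar : G.NashCharOf i β βt μ) {j : ℕ} (hj : j < G.m i) :
    G.uWedge i j β = G.uWedge i j (G.rho i j β βt) := by
  let T : Finset ℕ := {q ∈ Finset.range (G.m i) | G.Follows i j q}
  have mem_T {q} : q ∈ T ↔ q < G.m i ∧ G.Follows i j q := by simp [T]
  calc
    G.uWedge i j β = G.uWedge i j (G.switch i T β βt) :=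
      (EFG.uWedge_switch_eq hPR (fun _ => hchar.uWedge_switch_insert hPR hβ hβt) hj
        (fun _ hq => (mem_T.1 hq).1)
        (fun _ hq _ hr hf => mem_T.2 ⟨hr, (mem_T.1 hq).2.trans hf hPR hj (mem_T.1 hq).1 hr⟩)
        (fun _ hq => (mem_T.1 hq).2)).symm
    _ = G.uWedge i j (G.rho i j β βt) := by
      rw [EFG.rho_eq_switch]
      exact EFG.uWedge_switch_congr fun _ _ _ _ hq _ => mem_T.trans (and_iff_right hq)

/-- Equation (edneA): under the Nash characterization,
`u^i(β* ∧ I_i^j) = u^i(ϱ^i_{I_i^j}(β*, β̃*) ∧ I_i^j)` for every information set. -/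
theorem stmt17 (G : EFG) (hPR : G.PerfectRecall)
    (β βt : G.Profile) (μ : G.Belief)
    (hβ : G.IsBehProfile β) (hβt : G.IsBehProfile βt)
    (hchar : G.NashChar β βt μ) :
    ∀ (i : Fin G.n) (j : ℕ), j < G.m i →
      G.uWedge i j β = G.uWedge i j (G.rho i j β βt) :=
  fun i _ hj => stmt17_general G (hPR i) hβ (hβt i)
    ⟨hchar.1 i, hchar.2.1 i, hchar.2.2.2 i⟩ hj
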